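/- Set m' = k_{i+1} − k_i − 1 and let c' := Σ_{g=0}^{m'} (−1)^{m'−g} ξ^g ⊗ ψ(x(₊ᵢk)_{i+1,m'−g}) ∈ H_{k⁺ⁱ} ⊗_{H_k} H_{k⁺ⁱ}. Then for every z ∈ H_{₊ᵢk} one has (ψ(z) ⊗ 1)·c' = (1 ⊗ ψ(z))·c'; consequently the 𝕜-linear map H_{₊ᵢk} → H_{k⁺ⁱ} ⊗_{H_k} H_{k⁺ⁱ} sending z to (ψ(z) ⊗ 1)·c' is a homomorphism of (H_{₊ᵢk}, H_{₊ᵢk})-bimodules (where H_{₊ᵢk} acts on the left through ψ on the left tensor factor and on the right through ψ on the right tensor factor). -/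

import Mathlib

/-!
Cohomology rings of `n`-step partial flag varieties, following
Khovanov–Lauda, "A diagrammatic approach to categorification of quantum groups III",
Section 5 (Iterated flag varieties).
-/

open MvPolynomial Finset TensorProduct

noncomputable section

variable (𝕜 : Type) [Field 𝕜]

/-- The generator `x(k)_{j,α}` of `H_k` (with the conventions `x(k)_{j,0} = 1` and
`x(k)_{j,α} = 0` for `j` or `α` out of range), at the level of the ambient polynomial ring. -/
def xp (n : ℕ) (k : ℕ → ℕ) (j α : ℕ) : MvPolynomial (ℕ × ℕ) 𝕜 :=
  if α = 0 then 1 else if 1 ≤ j ∧ j ≤ n ∧ α ≤ k j - k (j - 1) then X (j, α) else 0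

/-- The degree `2d` part of the defining relation of `H_k`: the sum over all tuples
`(α_1, …, α_n)` with `α_1 + ⋯ + α_n = d` of the products `x(k)_{1,α_1} ⋯ x(k)_{n,α_n}`
(out-of-range tuples contribute `0`). -/
def relPoly (n : ℕ) (k : ℕ → ℕ) (d : ℕ) : MvPolynomial (ℕ × ℕ) 𝕜 :=
  ∑ t ∈ Finset.Nat.antidiagonalTuple n d, ∏ j : Fin n, xp 𝕜 n k ((j : ℕ) + 1) (t j)

/-- The pairs `(j, α)` indexing the actual generators of `H_k`. -/
def InRangeK (n : ℕ) (k : ℕ → ℕ) (j α : ℕ) : Prop :=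
  1 ≤ j ∧ j ≤ n ∧ 1 ≤ α ∧ α ≤ k j - k (j - 1)

/-- The defining ideal of `H_k`: the relations `relPoly` for every `d ≥ 1`, together with
all the irrelevant variables of the ambient polynomial ring. -/
def relIdealK (n : ℕ) (k : ℕ → ℕ) : Ideal (MvPolynomial (ℕ × ℕ) 𝕜) :=
  Ideal.span ({p | ∃ d, 1 ≤ d ∧ p = relPoly 𝕜 n k d} ∪
    {p | ∃ j α : ℕ, ¬ InRangeK n k j α ∧ p = X (j, α)})

/-- The cohomology ring `H_k` of the `n`-step flag variety `Fl(k)`. -/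
abbrev HK (n : ℕ) (k : ℕ → ℕ) : Type := MvPolynomial (ℕ × ℕ) 𝕜 ⧸ relIdealK 𝕜 n k

/-- The generator `x(k)_{j,α} ∈ H_k` (with conventions). -/
def xK (n : ℕ) (k : ℕ → ℕ) (j α : ℕ) : HK 𝕜 n k :=
  Ideal.Quotient.mk (relIdealK 𝕜 n k) (xp 𝕜 n k j α)

open Classical in
/-- The dual generator `x̄(k)_{j,α}`: the sum over all tuples `(α_ℓ)_{ℓ ≠ j}` with
`∑_{ℓ ≠ j} α_ℓ = α` of the products `∏_{ℓ ≠ j} x(k)_{ℓ,α_ℓ}`, at the polynomial level. -/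
def xbarp (n : ℕ) (k : ℕ → ℕ) (j α : ℕ) : MvPolynomial (ℕ × ℕ) 𝕜 :=
  ∑ t ∈ Finset.Nat.antidiagonalTuple n α,
    if ∀ ℓ : Fin n, (ℓ : ℕ) + 1 = j → t ℓ = 0 then
      ∏ ℓ : Fin n, xp 𝕜 n k ((ℓ : ℕ) + 1) (t ℓ)
    else 0

/-- The dual generator `x̄(k)_{j,α} ∈ H_k`. -/
def xbarK (n : ℕ) (k : ℕ → ℕ) (j α : ℕ) : HK 𝕜 n k :=
  Ideal.Quotient.mk (relIdealK 𝕜 n k) (xbarp 𝕜 n k j α)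

/-- The dual generator with an integer index, with `x̄(k)_{j,α} = 0` for `α < 0`. -/
def xbarKZ (n : ℕ) (k : ℕ → ℕ) (j : ℕ) (α : ℤ) : HK 𝕜 n k :=
  if 0 ≤ α then xbarK 𝕜 n k j α.toNat else 0

/-- The sequence `₊ᵢk`, obtained from `k` by replacing `k i` with `k i + 1`. -/
def kup (k : ℕ → ℕ) (i : ℕ) : ℕ → ℕ := fun j => if j = i then k i + 1 else k j

/-- The pairs `(j, α)` indexing the actual generators of `H_{k⁺ⁱ}`:
`ξ` is the variable `(0, 1)`, the `x_{j,α}` (`j ≠ i+1`) are the variables `(j, α)`, and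
the `x'_{i+1,α}` are the variables `(i+1, α)`. -/
def InRangeKi (n : ℕ) (k : ℕ → ℕ) (i j α : ℕ) : Prop :=
  (j = 0 ∧ α = 1) ∨
  (1 ≤ j ∧ j ≤ n ∧ j ≠ i + 1 ∧ 1 ≤ α ∧ α ≤ k j - k (j - 1)) ∨
  (j = i + 1 ∧ 1 ≤ α ∧ α ≤ k (i + 1) - k i - 1)

/-- The generator `x_{j,α}` (for `j ≠ i + 1`) of `H_{k⁺ⁱ}`, with conventions,
at the polynomial level. -/
def yp (n : ℕ) (k : ℕ → ℕ) (i j α : ℕ) : MvPolynomial (ℕ × ℕ) 𝕜 :=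
  if α = 0 then 1
  else if 1 ≤ j ∧ j ≤ n ∧ j ≠ i + 1 ∧ α ≤ k j - k (j - 1) then X (j, α) else 0

/-- The generator `x'_{i+1,α}` of `H_{k⁺ⁱ}`, with conventions, at the polynomial level. -/
def y'p (n : ℕ) (k : ℕ → ℕ) (i α : ℕ) : MvPolynomial (ℕ × ℕ) 𝕜 :=
  if α = 0 then 1 else if α ≤ k (i + 1) - k i - 1 then X (i + 1, α) else 0

/-- The coefficient of `t^α` in the `j`-th factor of the generating series
`(1 + ξt) ⬝ (∑_α x'_{i+1,α} t^α) ⬝ ∏_{j ≠ i+1} (∑_α x_{j,α} t^α)` defining `H_{k⁺ⁱ}`;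
the factor `j = 0` is `1 + ξ t`. -/
def fp (n : ℕ) (k : ℕ → ℕ) (i j α : ℕ) : MvPolynomial (ℕ × ℕ) 𝕜 :=
  if j = 0 then (if α = 0 then 1 else if α = 1 then X (0, 1) else 0)
  else if j = i + 1 then y'p 𝕜 n k i α
  else yp 𝕜 n k i j α

/-- The coefficient of `t^d` in
`(1 + ξt) ⬝ (∑_α x'_{i+1,α} t^α) ⬝ ∏_{j ≠ i+1} (∑_α x_{j,α} t^α)`. -/
def relPolyKi (n : ℕ) (k : ℕ → ℕ) (i d : ℕ) : MvPolynomial (ℕ × ℕ) 𝕜 :=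
  ∑ t ∈ Finset.Nat.antidiagonalTuple (n + 1) d, ∏ j : Fin (n + 1), fp 𝕜 n k i (j : ℕ) (t j)

/-- The defining ideal of `H_{k⁺ⁱ}`. -/
def relIdealKi (n : ℕ) (k : ℕ → ℕ) (i : ℕ) : Ideal (MvPolynomial (ℕ × ℕ) 𝕜) :=
  Ideal.span ({p | ∃ d, 1 ≤ d ∧ p = relPolyKi 𝕜 n k i d} ∪
    {p | ∃ j α : ℕ, ¬ InRangeKi n k i j α ∧ p = X (j, α)})

/-- The cohomology ring `H_{k⁺ⁱ}` of the `(n+1)`-step flag variety `Fl(k⁺ⁱ)`. -/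
abbrev HKi (n : ℕ) (k : ℕ → ℕ) (i : ℕ) : Type := MvPolynomial (ℕ × ℕ) 𝕜 ⧸ relIdealKi 𝕜 n k i

/-- The degree `2` generator `ξ ∈ H_{k⁺ⁱ}`. -/
def xiK (n : ℕ) (k : ℕ → ℕ) (i : ℕ) : HKi 𝕜 n k i :=
  Ideal.Quotient.mk (relIdealKi 𝕜 n k i) (X (0, 1))

/-- The generator `x_{j,α} ∈ H_{k⁺ⁱ}` (for `j ≠ i + 1`), with conventions. -/
def yK (n : ℕ) (k : ℕ → ℕ) (i j α : ℕ) : HKi 𝕜 n k i :=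
  Ideal.Quotient.mk (relIdealKi 𝕜 n k i) (yp 𝕜 n k i j α)

/-- The generator `x'_{i+1,α} ∈ H_{k⁺ⁱ}`, with conventions. -/
def y'K (n : ℕ) (k : ℕ → ℕ) (i α : ℕ) : HKi 𝕜 n k i :=
  Ideal.Quotient.mk (relIdealKi 𝕜 n k i) (y'p 𝕜 n k i α)

/-- `φ : H_k → H_{k⁺ⁱ}` is the algebra homomorphism determined by
`φ(x(k)_{j,α}) = x_{j,α}` for `j ≠ i+1` and
`φ(x(k)_{i+1,α}) = ξ·x'_{i+1,α-1} + x'_{i+1,α}`. -/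
def IsPhi (n : ℕ) (k : ℕ → ℕ) (i : ℕ) (φ : HK 𝕜 n k →ₐ[𝕜] HKi 𝕜 n k i) : Prop :=
  (∀ j α : ℕ, j ≠ i + 1 → φ (xK 𝕜 n k j α) = yK 𝕜 n k i j α) ∧
  (∀ α : ℕ, 1 ≤ α → φ (xK 𝕜 n k (i + 1) α) =
    xiK 𝕜 n k i * y'K 𝕜 n k i (α - 1) + y'K 𝕜 n k i α)

/-- `ψ : H_{₊ᵢk} → H_{k⁺ⁱ}` is the algebra homomorphism determined by
`ψ(x(₊ᵢk)_{j,α}) = x_{j,α}` for `j ≠ i, i+1`, `ψ(x(₊ᵢk)_{i+1,α}) = x'_{i+1,α}`, and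
`ψ(x(₊ᵢk)_{i,α}) = ξ·x_{i,α-1} + x_{i,α}`. -/
def IsPsi (n : ℕ) (k : ℕ → ℕ) (i : ℕ) (ψ : HK 𝕜 n (kup k i) →ₐ[𝕜] HKi 𝕜 n k i) : Prop :=
  (∀ j α : ℕ, j ≠ i → j ≠ i + 1 → ψ (xK 𝕜 n (kup k i) j α) = yK 𝕜 n k i j α) ∧
  (∀ α : ℕ, ψ (xK 𝕜 n (kup k i) (i + 1) α) = y'K 𝕜 n k i α) ∧
  (∀ α : ℕ, 1 ≤ α → ψ (xK 𝕜 n (kup k i) i α) =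
    xiK 𝕜 n k i * yK 𝕜 n k i i (α - 1) + yK 𝕜 n k i i α)

/-- The degree `2d` homogeneous component of a quotient of the polynomial ring, where the
variable `(j, α)` has degree `2α`. -/
def qgrade (I : Ideal (MvPolynomial (ℕ × ℕ) 𝕜)) (d : ℕ) :
    Submodule 𝕜 (MvPolynomial (ℕ × ℕ) 𝕜 ⧸ I) :=
  Submodule.map (Ideal.Quotient.mkₐ 𝕜 I).toLinearMap
    (weightedHomogeneousSubmodule 𝕜 (fun v : ℕ × ℕ => 2 * v.2) d)

end

section Statements2

variable (𝕜 : Type) [Field 𝕜]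

/-!
Think of the `x'_{i+1,α}` as the elementary symmetric functions of roots `r_1, …, r_{m'}`, so that
`Q(s) = ∑_g (-1)^{m'-g} x'_{i+1,m'-g} s^g` is the monic polynomial `∏ (s - r_j)`. The coefficients
of `(s - ξ) Q(s)` are, up to sign, the `φ(x(k)_{i+1,α})`, so the two copies of `(s - ξ) Q(s)` in the
tensor product over `H_k` coincide: `(s - ξ ⊗ 1) (Q ⊗ 1)(s) = (s - 1 ⊗ ξ) (1 ⊗ Q)(s)`. Putting
`s = ξ ⊗ 1` gives `0 = (ξ ⊗ 1 - 1 ⊗ ξ) c'`, because `c' = (1 ⊗ Q)(ξ ⊗ 1)`. Once `ξ ⊗ 1` and `1 ⊗ ξ`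
agree on `c'`, comparing coefficients makes the two copies of each `x'_{i+1,α}` agree on `c'`, and
these together with `ξ` and the image of `φ` generate an algebra containing the image of `ψ`.
-/

section VietaSum

variable {T : Type*} [CommRing T]

/-- The value at `s` of the polynomial of degree `m` with signed coefficients `x 0, …, x m`; it is
`∏ j, (s - r j)` when `x` lists the elementary symmetric functions of `r 1, …, r m`. The element
`c'` is such a value. -/
def vietaSum (x : ℕ → T) (m : ℕ) (s : T) : T :=
  ∑ g ∈ Finset.range (m + 1), (-1) ^ (m - g) * (s ^ g * x (m - g))

theorem vietaSum_zero (x : ℕ → T) (s : T) : vietaSum x 0 s = x 0 := by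
  simp [vietaSum]

theorem vietaSum_succ (x : ℕ → T) (m : ℕ) (s : T) :
    vietaSum x (m + 1) s = s * vietaSum x m s + (-1) ^ (m + 1) * x (m + 1) := by
  rw [vietaSum, Finset.sum_range_succ', vietaSum, Finset.mul_sum]
  congr 1
  · refine Finset.sum_congr rfl fun g _ => ?_
    rw [Nat.add_sub_add_right]
    ring
  · rw [Nat.sub_zero, pow_zero, one_mul]

theorem sub_mul_vietaSum {a : T} {e x : ℕ → T} (h₀ : e 0 = x 0)
    (h : ∀ α, e (α + 1) = a * x α + x (α + 1)) (m : ℕ) (s : T) :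
    (s - a) * vietaSum x m s = vietaSum e (m + 1) s - (-1) ^ (m + 1) * x (m + 1) := by
  induction m with
  | zero =>
    simp only [vietaSum_succ, vietaSum_zero, h, h₀]
    ring
  | succ m ih =>
    rw [vietaSum_succ x, vietaSum_succ e, h (m + 1)]
    linear_combination s * ih

theorem mul_vietaSum_eq_mul_vietaSum {a b : T} {p q : ℕ → T} (h₀ : p 0 = q 0)
    (h : ∀ α, a * p α + p (α + 1) = b * q α + q (α + 1)) {m : ℕ} (hm : p (m + 1) = q (m + 1)) :
    a * vietaSum q m a = b * vietaSum q m a := by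
  let e : ℕ → T
    | 0 => p 0
    | α + 1 => a * p α + p (α + 1)
  have hp := sub_mul_vietaSum (e := e) (x := p) rfl (fun _ => rfl) m a
  have hq := sub_mul_vietaSum (e := e) (x := q) h₀ h m a
  rw [hm] at hp
  linear_combination hq - hp

theorem mul_eq_mul_of_linear_factor {a b c : T} {p q : ℕ → T} (h₀ : p 0 = q 0)
    (h : ∀ α, a * p α + p (α + 1) = b * q α + q (α + 1)) (hc : a * c = b * c) (α : ℕ) :
    p α * c = q α * c := by
  induction α with
  | zero => rw [h₀]
  | succ α ih => linear_combination c * h α - a * ih - q α * hc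

end VietaSum

theorem sum_tmul_eq_vietaSum {R A B : Type*} [CommSemiring R] [CommRing A] [CommRing B]
    [Algebra R A] [Algebra R B] (x : ℕ → B) (m : ℕ) (s : A) :
    ∑ g ∈ Finset.range (m + 1), (-1 : A ⊗[R] B) ^ (m - g) * ((s ^ g) ⊗ₜ[R] x (m - g)) =
      vietaSum (fun α => 1 ⊗ₜ[R] x α) m (s ⊗ₜ[R] 1) := by
  simp only [vietaSum, Algebra.TensorProduct.tmul_pow, one_pow,
    Algebra.TensorProduct.tmul_mul_tmul, mul_one, one_mul]

theorem map_mul_eq_map_mul_of_adjoin_eq_top {R A T : Type*} [CommSemiring R] [Semiring A]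
    [Algebra R A] [CommSemiring T] {S : Set A} (hS : Algebra.adjoin R S = ⊤) {f g : A →+* T} {c : T}
    (hR : ∀ r, f (algebraMap R A r) = g (algebraMap R A r)) (hgen : ∀ x ∈ S, f x * c = g x * c)
    (z : A) : f z * c = g z * c := by
  have hz : z ∈ Algebra.adjoin R S := hS ▸ Algebra.mem_top
  induction hz using Algebra.adjoin_induction with
  | mem x hx => exact hgen x hx
  | algebraMap r => rw [hR]
  | add x y _ _ hx hy => simp only [map_add, add_mul, hx, hy]
  | mul x y _ _ hx hy =>
    calc f (x * y) * c = f x * (f y * c) := by rw [map_mul, mul_assoc]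
      _ = g y * (f x * c) := by rw [hy, mul_left_comm]
      _ = g (x * y) * c := by rw [hx, map_mul, mul_left_comm, mul_assoc]

section Generators

variable (n i : ℕ) (k : ℕ → ℕ)

theorem xK_zero (j : ℕ) : xK 𝕜 n k j 0 = 1 := by
  simp [xK, xp]

theorem y'K_zero : y'K 𝕜 n k i 0 = 1 := by
  simp [y'K, y'p]

variable {k i} in
theorem y'K_eq_zero {α : ℕ} (hα : k (i + 1) - k i - 1 < α) : y'K 𝕜 n k i α = 0 := by
  rw [y'K, y'p, if_neg (by lia), if_neg hα.not_ge, map_zero]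

theorem mk_X_mem_adjoin_xK (j α : ℕ) :
    Ideal.Quotient.mkₐ 𝕜 (relIdealK 𝕜 n k) (X (j, α)) ∈
      Algebra.adjoin 𝕜 (Set.range fun v : ℕ × ℕ => xK 𝕜 n k v.1 v.2) := by
  by_cases hr : InRangeK n k j α
  · have hxp : xp 𝕜 n k j α = X (j, α) := by
      obtain ⟨hj, hjn, hα, hαk⟩ := hr
      rw [xp, if_neg (by lia), if_pos ⟨hj, hjn, hαk⟩]
    rw [← hxp]
    exact Algebra.subset_adjoin ⟨(j, α), rfl⟩
  · have hX : (X (j, α) : MvPolynomial (ℕ × ℕ) 𝕜) ∈ relIdealK 𝕜 n k :=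
      Ideal.subset_span (Or.inr ⟨j, α, hr, rfl⟩)
    rw [Ideal.Quotient.mkₐ_eq_mk, Ideal.Quotient.eq_zero_iff_mem.2 hX]
    exact zero_mem _

theorem adjoin_range_xK :
    Algebra.adjoin 𝕜 (Set.range fun v : ℕ × ℕ => xK 𝕜 n k v.1 v.2) = ⊤ := by
  rw [eq_top_iff, ← (AlgHom.range_eq_top _).2 (Ideal.Quotient.mkₐ_surjective 𝕜 (relIdealK 𝕜 n k)),
    ← Algebra.map_top, ← adjoin_range_X, AlgHom.map_adjoin, Algebra.adjoin_le_iff]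
  rintro _ ⟨_, ⟨⟨j, α⟩, rfl⟩, rfl⟩
  exact mk_X_mem_adjoin_xK 𝕜 n k j α

end Generators

section Intertwining

variable {𝕜} {n i : ℕ} {k : ℕ → ℕ} {φ : HK 𝕜 n k →ₐ[𝕜] HKi 𝕜 n k i}
  {ψ : HK 𝕜 n (kup k i) →ₐ[𝕜] HKi 𝕜 n k i} {T : Type*} [CommRing T] {L R : HKi 𝕜 n k i →+* T}

theorem map_yK_eq (hφ : IsPhi 𝕜 n k i φ) (hLR : ∀ x, L (φ x) = R (φ x)) {j : ℕ} (hj : j ≠ i + 1)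
    (α : ℕ) : L (yK 𝕜 n k i j α) = R (yK 𝕜 n k i j α) := by
  rw [← hφ.1 j α hj, hLR]

theorem map_xiK_mul_add_map_y'K_eq (hφ : IsPhi 𝕜 n k i φ) (hLR : ∀ x, L (φ x) = R (φ x)) (α : ℕ) :
    L (xiK 𝕜 n k i) * L (y'K 𝕜 n k i α) + L (y'K 𝕜 n k i (α + 1)) =
      R (xiK 𝕜 n k i) * R (y'K 𝕜 n k i α) + R (y'K 𝕜 n k i (α + 1)) := by
  have hx : φ (xK 𝕜 n k (i + 1) (α + 1)) = xiK 𝕜 n k i * y'K 𝕜 n k i α + y'K 𝕜 n k i (α + 1) :=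
    hφ.2 (α + 1) α.succ_pos
  simpa only [hx, map_add, map_mul] using hLR (xK 𝕜 n k (i + 1) (α + 1))

theorem map_xiK_mul_vietaSum_eq (hφ : IsPhi 𝕜 n k i φ) (hLR : ∀ x, L (φ x) = R (φ x)) {m : ℕ}
    (hm : k (i + 1) - k i - 1 ≤ m) :
    L (xiK 𝕜 n k i) * vietaSum (fun α => R (y'K 𝕜 n k i α)) m (L (xiK 𝕜 n k i)) =
      R (xiK 𝕜 n k i) * vietaSum (fun α => R (y'K 𝕜 n k i α)) m (L (xiK 𝕜 n k i)) := by
  refine mul_vietaSum_eq_mul_vietaSum (p := fun α => L (y'K 𝕜 n k i α)) ?_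
    (map_xiK_mul_add_map_y'K_eq hφ hLR) ?_
  · simp only [y'K_zero, map_one]
  · simp only [y'K_eq_zero 𝕜 n (Nat.lt_succ_of_le hm), map_zero]

variable {c : T}

theorem map_y'K_mul_eq (hφ : IsPhi 𝕜 n k i φ) (hLR : ∀ x, L (φ x) = R (φ x))
    (hc : L (xiK 𝕜 n k i) * c = R (xiK 𝕜 n k i) * c) (α : ℕ) :
    L (y'K 𝕜 n k i α) * c = R (y'K 𝕜 n k i α) * c := by
  refine mul_eq_mul_of_linear_factor (p := fun α => L (y'K 𝕜 n k i α))
    (q := fun α => R (y'K 𝕜 n k i α)) ?_ (map_xiK_mul_add_map_y'K_eq hφ hLR) hc α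
  simp only [y'K_zero, map_one]

theorem map_psi_xK_mul_eq (hφ : IsPhi 𝕜 n k i φ) (hψ : IsPsi 𝕜 n k i ψ)
    (hLR : ∀ x, L (φ x) = R (φ x)) (hc : L (xiK 𝕜 n k i) * c = R (xiK 𝕜 n k i) * c) (j α : ℕ) :
    L (ψ (xK 𝕜 n (kup k i) j α)) * c = R (ψ (xK 𝕜 n (kup k i) j α)) * c := by
  obtain ⟨hψ_other, hψ_succ, hψ_self⟩ := hψ
  rcases Nat.eq_zero_or_pos α with rfl | hα
  · simp only [xK_zero, map_one]
  by_cases hji : j = i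
  · subst hji
    have hy (β : ℕ) := map_yK_eq hφ hLR j.succ_ne_self.symm β
    rw [hψ_self α hα, map_add, map_mul, map_add, map_mul, hy, hy]
    linear_combination R (yK 𝕜 n k j j (α - 1)) * hc
  by_cases hji' : j = i + 1
  · subst hji'
    rw [hψ_succ, map_y'K_mul_eq hφ hLR hc]
  · rw [hψ_other j α hji hji', map_yK_eq hφ hLR hji']

theorem map_psi_mul_eq (hφ : IsPhi 𝕜 n k i φ) (hψ : IsPsi 𝕜 n k i ψ)
    (hLR : ∀ x, L (φ x) = R (φ x)) (hc : L (xiK 𝕜 n k i) * c = R (xiK 𝕜 n k i) * c)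
    (z : HK 𝕜 n (kup k i)) : L (ψ z) * c = R (ψ z) * c := by
  refine map_mul_eq_map_mul_of_adjoin_eq_top (adjoin_range_xK 𝕜 n (kup k i))
    (f := L.comp ψ.toRingHom) (g := R.comp ψ.toRingHom) (fun r => ?_) ?_ z
  · have hr : ψ (algebraMap 𝕜 _ r) = φ (algebraMap 𝕜 _ r) := by
      rw [AlgHom.commutes, AlgHom.commutes]
    change L (ψ _) = R (ψ _)
    rw [hr, hLR]
  · rintro _ ⟨⟨j, α⟩, rfl⟩
    exact map_psi_xK_mul_eq hφ hψ hLR hc j α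

theorem map_psi_mul_vietaSum_eq (hφ : IsPhi 𝕜 n k i φ) (hψ : IsPsi 𝕜 n k i ψ)
    (hLR : ∀ x, L (φ x) = R (φ x)) {m : ℕ} (hm : k (i + 1) - k i - 1 ≤ m)
    (z : HK 𝕜 n (kup k i)) :
    L (ψ z) * vietaSum (fun α => R (y'K 𝕜 n k i α)) m (L (xiK 𝕜 n k i)) =
      R (ψ z) * vietaSum (fun α => R (y'K 𝕜 n k i α)) m (L (xiK 𝕜 n k i)) :=
  map_psi_mul_eq hφ hψ hLR (map_xiK_mul_vietaSum_eq hφ hLR hm) z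

end Intertwining

set_option synthInstance.maxHeartbeats 1000000 in
set_option maxHeartbeats 1000000 in
theorem stmt12 (n N i : ℕ) (k : ℕ → ℕ)
    (hn : 1 ≤ n) (hk0 : k 0 = 0) (hkN : k n = N) (hmono : ∀ j, j < n → k j ≤ k (j + 1))
    (hi1 : 1 ≤ i) (hin : i + 1 ≤ n) (hik : k i < k (i + 1))
    (φ : HK 𝕜 n k →ₐ[𝕜] HKi 𝕜 n k i) (hφ : IsPhi 𝕜 n k i φ)
    (ψ : HK 𝕜 n (kup k i) →ₐ[𝕜] HKi 𝕜 n k i) (hψ : IsPsi 𝕜 n k i ψ) :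
    letI : Algebra (HK 𝕜 n k) (HKi 𝕜 n k i) := φ.toRingHom.toAlgebra
    ∀ z : HK 𝕜 n (kup k i),
      (ψ z ⊗ₜ[HK 𝕜 n k] (1 : HKi 𝕜 n k i)) *
        (∑ g ∈ Finset.range (k (i + 1) - k i - 1 + 1),
          (-1 : TensorProduct (HK 𝕜 n k) (HKi 𝕜 n k i) (HKi 𝕜 n k i)) ^
              (k (i + 1) - k i - 1 - g) *
            ((xiK 𝕜 n k i ^ g) ⊗ₜ[HK 𝕜 n k]
              ψ (xK 𝕜 n (kup k i) (i + 1) (k (i + 1) - k i - 1 - g)))) =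
      ((1 : HKi 𝕜 n k i) ⊗ₜ[HK 𝕜 n k] ψ z) *
        (∑ g ∈ Finset.range (k (i + 1) - k i - 1 + 1),
          (-1 : TensorProduct (HK 𝕜 n k) (HKi 𝕜 n k i) (HKi 𝕜 n k i)) ^
              (k (i + 1) - k i - 1 - g) *
            ((xiK 𝕜 n k i ^ g) ⊗ₜ[HK 𝕜 n k]
              ψ (xK 𝕜 n (kup k i) (i + 1) (k (i + 1) - k i - 1 - g)))) := by
  intro z
  let : Algebra (HK 𝕜 n k) (HKi 𝕜 n k i) := φ.toRingHom.toAlgebra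
  let L : HKi 𝕜 n k i →+* HKi 𝕜 n k i ⊗[HK 𝕜 n k] HKi 𝕜 n k i :=
    Algebra.TensorProduct.includeLeftRingHom
  let R : HKi 𝕜 n k i →+* HKi 𝕜 n k i ⊗[HK 𝕜 n k] HKi 𝕜 n k i :=
    Algebra.TensorProduct.includeRight.toRingHom
  have hLR (x : HK 𝕜 n k) : L (φ x) = R (φ x) := Algebra.TensorProduct.tmul_one_eq_one_tmul x
  simp only [hψ.2.1, sum_tmul_eq_vietaSum]
  exact map_psi_mul_vietaSum_eq (T := HKi 𝕜 n k i ⊗[HK 𝕜 n k] HKi 𝕜 n k i) hφ hψ hLR le_rfl z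

end Statements2
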